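/- arXiv:1404.4644 — 3 statements merged into one kernel-verified Lean document; each statement's English description precedes it below -/
import Mathlib

section
/- Let A be an n×n real matrix, e ∈ ℝ^n the all-ones vector, and k ≥ 1 a natural number such that eᵀA^i e ≠ 0 for all 1 ≤ i ≤ k. Define C^A ∈ ℝ^{k×k} by C^A_{i,j} = Cov(n·A^i e / (eᵀA^i e), n·A^j e / (eᵀA^j e)), where Cov(x, y) = (1/n) Σ_{t=1}^{n} (x(t) − x̄)(y(t) − ȳ) is the sample covariance. Then for every n×n permutation matrix P, C^{P A Pᵀ} = C^A; i.e., every entry of the covariance representation is invariant under simultaneous reordering of the rows and columns of A. -/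
/-!
Conjugating `A` by a permutation matrix permutes the coordinates of every power-iteration vector:
`(P A Pᵀ)^i e = P A^i Pᵀ e = P A^i e`, because `Pᵀ P = 1` and `Pᵀ e = e`
(`conj_permMatrix_pow_mulVec_onesVec`). The normalizing constants `eᵀ A^i e` are coordinate sums,
hence unchanged, and the sample covariance does not change when both of its arguments are
reordered by the same permutation (`sampleCov_comp_perm`).
-/

open Matrix BigOperators

/-- The sample covariance `Cov(x, y) = (1/n) Σᵢ (x i − x̄)(y i − ȳ)` of two vectors in `ℝ^n`. -/
noncomputable def sampleCov {n : ℕ} (x y : Fin n → ℝ) : ℝ :=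
  ((1 : ℝ) / n) * ∑ i, (x i - ((1 : ℝ) / n) * ∑ j, x j) * (y i - ((1 : ℝ) / n) * ∑ j, y j)

/-- The all-ones vector `e ∈ ℝ^n`. -/
def onesVec (n : ℕ) : Fin n → ℝ := fun _ => 1

/-- The `(i,j)`-entry of the covariance representation of `A`:
`C^A_{i,j} = Cov(n·A^i e / (eᵀ A^i e), n·A^j e / (eᵀ A^j e))`. -/
noncomputable def covRep {n : ℕ} (A : Matrix (Fin n) (Fin n) ℝ) (i j : ℕ) : ℝ :=
  sampleCov
    (fun t => (n : ℝ) * ((A ^ i) *ᵥ onesVec n) t / (onesVec n ⬝ᵥ ((A ^ i) *ᵥ onesVec n)))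
    (fun t => (n : ℝ) * ((A ^ j) *ᵥ onesVec n) t / (onesVec n ⬝ᵥ ((A ^ j) *ᵥ onesVec n)))

lemma sampleCov_comp_perm {n : ℕ} (σ : Equiv.Perm (Fin n)) (x y : Fin n → ℝ) :
    sampleCov (x ∘ σ) (y ∘ σ) = sampleCov x y := by
  simp only [sampleCov, Function.comp_apply, Equiv.sum_comp σ x, Equiv.sum_comp σ y]
  rw [Equiv.sum_comp σ (fun i =>
    (x i - ((1 : ℝ) / n) * ∑ j, x j) * (y i - ((1 : ℝ) / n) * ∑ j, y j))]

lemma onesVec_dotProduct_comp_perm {n : ℕ} (σ : Equiv.Perm (Fin n)) (v : Fin n → ℝ) :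
    onesVec n ⬝ᵥ (v ∘ σ) = onesVec n ⬝ᵥ v := by
  simp only [dotProduct, onesVec, one_mul, Function.comp_apply, Equiv.sum_comp σ v]

lemma conj_permMatrix_pow_mulVec_onesVec {n : ℕ} (σ : Equiv.Perm (Fin n))
    (A : Matrix (Fin n) (Fin n) ℝ) (i : ℕ) :
    (σ.permMatrix ℝ * A * (σ.permMatrix ℝ)ᵀ) ^ i *ᵥ onesVec n = (A ^ i *ᵥ onesVec n) ∘ σ := by
  induction i with
  | zero =>
    ext t
    simp [onesVec]
  | succ i ih =>
    have hcancel : ∀ v : Fin n → ℝ, (v ∘ σ) ∘ (σ⁻¹ : Equiv.Perm (Fin n)) = v := fun v => by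
      ext t
      simp
    rw [pow_succ', ← mulVec_mulVec, ih, ← mulVec_mulVec, ← mulVec_mulVec, transpose_permMatrix,
      permMatrix_mulVec, permMatrix_mulVec, hcancel, mulVec_mulVec, ← pow_succ']

/-- Let `A` be an `n × n` real matrix and `k ≥ 1` with `eᵀ A^i e ≠ 0` for all
`1 ≤ i ≤ k`. Then for every `n × n` permutation matrix `P`, the covariance representation is
invariant: `C^{P A Pᵀ}_{i,j} = C^A_{i,j}` for all `1 ≤ i, j ≤ k`. -/
theorem covRep_conj_permMatrix {n k : ℕ} (hk : 1 ≤ k) (A P : Matrix (Fin n) (Fin n) ℝ)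
    (hP : ∃ σ : Equiv.Perm (Fin n), P = σ.permMatrix ℝ)
    (hnz : ∀ i : ℕ, 1 ≤ i → i ≤ k → onesVec n ⬝ᵥ ((A ^ i) *ᵥ onesVec n) ≠ 0) :
    ∀ i j : ℕ, 1 ≤ i → i ≤ k → 1 ≤ j → j ≤ k →
      covRep (P * A * Pᵀ) i j = covRep A i j := by
  obtain ⟨σ, rfl⟩ := hP
  intro i j _ _ _ _
  simp only [covRep, conj_permMatrix_pow_mulVec_onesVec, onesVec_dotProduct_comp_perm]
  exact sampleCov_comp_perm σ
    (fun t => (n : ℝ) * ((A ^ i) *ᵥ onesVec n) t / (onesVec n ⬝ᵥ ((A ^ i) *ᵥ onesVec n)))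
    (fun t => (n : ℝ) * ((A ^ j) *ᵥ onesVec n) t / (onesVec n ⬝ᵥ ((A ^ j) *ᵥ onesVec n)))
end

section
/- Let A be an n×n real symmetric matrix with an orthonormal basis of eigenvectors v₁, …, v_n and eigenvalues λ₁, …, λ_n, let e ∈ ℝ^n be the all-ones vector, and set s_t = eᵀv_t. Fix i, j ≥ 1 with Σ_t λ_t^i s_t² ≠ 0 and Σ_t λ_t^j s_t² ≠ 0. Then the (i,j)-entry of the covariance representation satisfies C^A_{i,j} = n·(Σ_{t=1}^{n} λ_t^{i+j} s_t²) / ((Σ_{t=1}^{n} λ_t^{i} s_t²)(Σ_{t=1}^{n} λ_t^{j} s_t²)) − 1. -/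
/-!
The mean of `n • A^i e / (eᵀA^i e)` is `1`, so expanding the covariance of two such vectors leaves
`n (A^i e ⬝ A^j e) / ((eᵀA^i e)(eᵀA^j e)) - 1`. By symmetry of `A`, the coordinate of `A^k e` along
the eigenvector `v t` is `lam t ^ k * s t` (`mulVec_pow_dot_eigenvector`), and Parseval's identity in
the orthonormal family `v` (`dotProduct_eq_sum_of_orthonormal`), which is a basis because it has `n`
members, turns all three inner products into spectral sums.
-/

open Matrix BigOperators

/-- Parseval's identity: `n` orthonormal vectors of `ℝ^n` form a basis, since a one-sided inverse
of a square matrix is two-sided. -/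
theorem dotProduct_eq_sum_of_orthonormal {n : ℕ} (v : Fin n → Fin n → ℝ)
    (horth : ∀ s t, v s ⬝ᵥ v t = if s = t then (1 : ℝ) else 0) (x y : Fin n → ℝ) :
    x ⬝ᵥ y = ∑ t, (x ⬝ᵥ v t) * (y ⬝ᵥ v t) := by
  have h : (Matrix.of v) * (Matrix.of v)ᵀ = 1 := by
    ext s t
    rw [Matrix.one_apply, ← horth s t]
    rfl
  have h' : (Matrix.of v)ᵀ * (Matrix.of v) = 1 := mul_eq_one_comm.mp h
  have key : x ⬝ᵥ y = (Matrix.of v *ᵥ x) ⬝ᵥ (Matrix.of v *ᵥ y) := by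
    rw [Matrix.dotProduct_mulVec, ← Matrix.mulVec_transpose, Matrix.mulVec_mulVec, h',
      Matrix.one_mulVec]
  rw [key]
  refine Finset.sum_congr rfl fun t _ => ?_
  rw [dotProduct_comm x, dotProduct_comm y]
  rfl

theorem mulVec_pow_dot_eigenvector {n : ℕ} (A : Matrix (Fin n) (Fin n) ℝ) (hA : A.IsSymm)
    (x w : Fin n → ℝ) (c : ℝ) (hw : A *ᵥ w = c • w) (k : ℕ) :
    ((A ^ k) *ᵥ x) ⬝ᵥ w = c ^ k * (x ⬝ᵥ w) := by
  induction k with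
  | zero => simp
  | succ k ih =>
    rw [pow_succ', ← Matrix.mulVec_mulVec, dotProduct_comm, Matrix.dotProduct_mulVec,
      ← Matrix.mulVec_transpose, hA.eq, hw, smul_dotProduct, dotProduct_comm, ih, smul_eq_mul]
    ring

/-- The covariance of two vectors rescaled to have mean `1`, in terms of inner products. -/
theorem sampleCov_normalized {n : ℕ} (hn : (n : ℝ) ≠ 0) (x y : Fin n → ℝ)
    (hx : onesVec n ⬝ᵥ x ≠ 0) (hy : onesVec n ⬝ᵥ y ≠ 0) :
    sampleCov (fun t => (n : ℝ) * x t / (onesVec n ⬝ᵥ x))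
        (fun t => (n : ℝ) * y t / (onesVec n ⬝ᵥ y))
      = (n : ℝ) * (x ⬝ᵥ y) / ((onesVec n ⬝ᵥ x) * (onesVec n ⬝ᵥ y)) - 1 := by
  have mean : ∀ z : Fin n → ℝ, onesVec n ⬝ᵥ z ≠ 0 →
      ∑ t, (n : ℝ) * z t / (onesVec n ⬝ᵥ z) = n := by
    intro z hz
    have hs : ∑ t, z t = onesVec n ⬝ᵥ z := by simp [onesVec, dotProduct]
    rw [← Finset.sum_div, ← Finset.mul_sum, hs]
    field_simp
  have prod : ∑ t, ((n : ℝ) * x t / (onesVec n ⬝ᵥ x)) * ((n : ℝ) * y t / (onesVec n ⬝ᵥ y))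
      = (n : ℝ) ^ 2 * (x ⬝ᵥ y) / ((onesVec n ⬝ᵥ x) * (onesVec n ⬝ᵥ y)) := by
    rw [show x ⬝ᵥ y = ∑ t, x t * y t from rfl, Finset.mul_sum, Finset.sum_div]
    refine Finset.sum_congr rfl fun t _ => ?_
    field_simp
  unfold sampleCov
  simp only [mean x hx, mean y hy, one_div, inv_mul_cancel₀ hn, sub_mul, mul_sub, one_mul, mul_one,
    Finset.sum_sub_distrib, prod]
  simp only [Finset.sum_const, Finset.card_univ, Fintype.card_fin, nsmul_eq_mul, mul_one]
  field_simp
  ring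

/-- Let `A` be an `n × n` real symmetric matrix with orthonormal eigenvectors
`v₁, …, vₙ`, eigenvalues `λ₁, …, λₙ`, and `sₜ = eᵀvₜ`. For `i, j ≥ 1` with
`Σₜ λₜ^i sₜ² ≠ 0` and `Σₜ λₜ^j sₜ² ≠ 0`, the `(i,j)`-entry of the covariance representation,
`C^A_{i,j} = Cov(n·A^i e/(eᵀA^i e), n·A^j e/(eᵀA^j e))`, satisfies
`C^A_{i,j} = n·(Σₜ λₜ^{i+j} sₜ²)/((Σₜ λₜ^i sₜ²)(Σₜ λₜ^j sₜ²)) − 1`. -/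
theorem covRep_entry_spectrum {n : ℕ} (A : Matrix (Fin n) (Fin n) ℝ) (hA : A.IsSymm)
    (v : Fin n → Fin n → ℝ) (lam : Fin n → ℝ)
    (heig : ∀ t, A *ᵥ v t = lam t • v t)
    (horth : ∀ s t, v s ⬝ᵥ v t = if s = t then (1 : ℝ) else 0)
    (i j : ℕ) (hi : 1 ≤ i) (hj : 1 ≤ j)
    (hinz : ∑ t, lam t ^ i * (onesVec n ⬝ᵥ v t) ^ 2 ≠ 0)
    (hjnz : ∑ t, lam t ^ j * (onesVec n ⬝ᵥ v t) ^ 2 ≠ 0) :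
    sampleCov
        (fun t => (n : ℝ) * ((A ^ i) *ᵥ onesVec n) t / (onesVec n ⬝ᵥ ((A ^ i) *ᵥ onesVec n)))
        (fun t => (n : ℝ) * ((A ^ j) *ᵥ onesVec n) t / (onesVec n ⬝ᵥ ((A ^ j) *ᵥ onesVec n)))
      = (n : ℝ) * (∑ t, lam t ^ (i + j) * (onesVec n ⬝ᵥ v t) ^ 2) /
          ((∑ t, lam t ^ i * (onesVec n ⬝ᵥ v t) ^ 2) *
            (∑ t, lam t ^ j * (onesVec n ⬝ᵥ v t) ^ 2)) - 1 := by
  have hn : (n : ℝ) ≠ 0 := by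
    -- For `n = 0` the spectral sums are empty, hence zero.
    rintro h
    obtain rfl : n = 0 := by exact_mod_cast h
    simp at hinz
  have hdot := dotProduct_eq_sum_of_orthonormal v horth
  have hpow : ∀ (k : ℕ) (t : Fin n),
      ((A ^ k) *ᵥ onesVec n) ⬝ᵥ v t = lam t ^ k * (onesVec n ⬝ᵥ v t) :=
    fun k t => mulVec_pow_dot_eigenvector A hA _ _ _ (heig t) k
  have hone : ∀ k : ℕ, onesVec n ⬝ᵥ ((A ^ k) *ᵥ onesVec n)
      = ∑ t, lam t ^ k * (onesVec n ⬝ᵥ v t) ^ 2 := by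
    intro k
    rw [hdot]
    refine Finset.sum_congr rfl fun t _ => ?_
    rw [hpow]
    ring
  have htwo : ((A ^ i) *ᵥ onesVec n) ⬝ᵥ ((A ^ j) *ᵥ onesVec n)
      = ∑ t, lam t ^ (i + j) * (onesVec n ⬝ᵥ v t) ^ 2 := by
    rw [hdot]
    refine Finset.sum_congr rfl fun t _ => ?_
    rw [hpow, hpow]
    ring
  rw [sampleCov_normalized hn _ _ (by rwa [hone]) (by rwa [hone]), htwo, hone, hone]
end

section
/- Let C₁, …, C_N be real symmetric positive definite k×k matrices, and define the N×N matrix S by S_{a,b} = exp(−Dist(C_a, C_b)) where Dist(C, D) = (1/2)·log( det((C+D)/2) / √(det(C)·det(D)) ); equivalently S_{a,b} = det(C_a)^{1/4} · det(C_b)^{1/4} / det((C_a + C_b)/2)^{1/2}. Then S is a symmetric positive semidefinite matrix. -/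
/-!
For a positive definite matrix `M`, the Gaussian integral is
`∫ exp (-xᵀMx) dx = (√π)ᵏ / √(det M)`. Taking `M = (C_a + C_b)/2`, the integrand splits as
`exp (-xᵀC_a x/2) * exp (-xᵀC_b x/2)`, so up to the positive constant `(√π)ᵏ` and the factors
`det(C_a)^{1/4}`, the matrix `S` is the Gram matrix in `L²(ℝᵏ)` of the functions
`x ↦ exp (-xᵀC_a x/2)`. Hence `zᵀSz` is, up to a positive constant, the integral of a square.
The two ingredients are `gaussian_integral` and the closed form `exp_neg_bhatDist`.
-/

open Matrix BigOperators

/-- The Bhattacharyya distance between two positive definite matrices: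
`Dist(C, D) = (1/2)·log( det((C+D)/2) / √(det(C)·det(D)) )`. -/
noncomputable def bhatDist {k : ℕ} (C D : Matrix (Fin k) (Fin k) ℝ) : ℝ :=
  (1 / 2) * Real.log ((((1 : ℝ) / 2) • (C + D)).det / Real.sqrt (C.det * D.det))

open MeasureTheory

/-- The standard Gaussian integral on `ℝᵏ`; the general case reduces to it by a linear change of
variables. -/
lemma standard_gaussian (k : ℕ) :
    Integrable (fun y : Fin k → ℝ => Real.exp (-(y ⬝ᵥ y))) ∧
      ∫ y : Fin k → ℝ, Real.exp (-(y ⬝ᵥ y)) = √Real.pi ^ k := by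
  have h : (fun y : Fin k → ℝ => Real.exp (-(y ⬝ᵥ y))) =
      fun y => ∏ i, Real.exp (-1 * y i ^ 2) := by
    funext y
    rw [← Real.exp_sum]
    simp [dotProduct, sq]
  rw [h]
  constructor
  · exact Integrable.fintype_prod (f := fun _ t => Real.exp (-1 * t ^ 2))
      (fun _ => integrable_exp_neg_mul_sq one_pos)
  · rw [integral_fintype_prod_volume_eq_pow (fun t : ℝ => Real.exp (-1 * t ^ 2)),
      integral_gaussian]
    simp

open scoped MatrixOrder in
/-- Writing `M = BᵀB` with `B` invertible, the substitution `y = Bx` turns `xᵀMx` into `yᵀy` and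
contributes the Jacobian factor `1 / |det B| = 1 / √(det M)`. -/
lemma gaussian_integral {k : ℕ} {M : Matrix (Fin k) (Fin k) ℝ} (hM : M.PosDef) :
    Integrable (fun x : Fin k → ℝ => Real.exp (-(x ⬝ᵥ M *ᵥ x))) ∧
      ∫ x : Fin k → ℝ, Real.exp (-(x ⬝ᵥ M *ᵥ x)) = √Real.pi ^ k / √M.det := by
  obtain ⟨B, hB⟩ := CStarAlgebra.nonneg_iff_eq_star_mul_self.mp hM.posSemidef.nonneg
  rw [star_eq_conjTranspose, conjTranspose_eq_transpose_of_trivial] at hB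
  have hdet : M.det = B.det ^ 2 := by rw [hB, det_mul, det_transpose, sq]
  have hB0 : B.det ≠ 0 := by
    intro h
    have := hM.det_pos
    simp [hdet, h] at this
  have hquad : ∀ x : Fin k → ℝ, x ⬝ᵥ M *ᵥ x = toLin' B x ⬝ᵥ toLin' B x := by
    intro x
    rw [hB, toLin'_apply, ← mulVec_mulVec, dotProduct_mulVec, vecMul_transpose]
  have hmap := Real.map_matrix_volume_pi_eq_smul_volume_pi hB0
  have hmeas : AEMeasurable (toLin' B) (volume : Measure (Fin k → ℝ)) :=
    (LinearMap.continuous_of_finiteDimensional _).measurable.aemeasurable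
  obtain ⟨hint, hval⟩ := standard_gaussian k
  have hcont : Continuous (fun y : Fin k → ℝ => Real.exp (-(y ⬝ᵥ y))) := by
    unfold dotProduct
    fun_prop
  simp only [hquad]
  constructor
  · refine (integrable_map_measure hcont.aestronglyMeasurable hmeas).mp ?_
    rw [hmap]
    exact hint.smul_measure ENNReal.ofReal_ne_top
  · rw [← integral_map (f := fun y : Fin k → ℝ => Real.exp (-(y ⬝ᵥ y))) hmeas
      hcont.aestronglyMeasurable, hmap, integral_smul_measure, hval, hdet, Real.sqrt_sq_eq_abs,
      ENNReal.toReal_ofReal (abs_nonneg _), abs_inv, smul_eq_mul]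
    ring

lemma exp_neg_bhatDist {k : ℕ} {C D : Matrix (Fin k) (Fin k) ℝ} (hC : C.PosDef) (hD : D.PosDef) :
    Real.exp (-(bhatDist C D)) = √√C.det * √√D.det / √(((1 : ℝ) / 2) • (C + D)).det := by
  have hM : 0 < (((1 : ℝ) / 2) • (C + D)).det :=
    ((hC.add hD).smul (by norm_num : (0 : ℝ) < 1 / 2)).det_pos
  have hCD : 0 < √(C.det * D.det) := Real.sqrt_pos.mpr (mul_pos hC.det_pos hD.det_pos)
  rw [bhatDist, Real.exp_neg, one_div_mul_eq_div, ← Real.log_sqrt (div_pos hM hCD).le,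
    Real.exp_log (Real.sqrt_pos.mpr (div_pos hM hCD)), Real.sqrt_div hM.le, inv_div,
    Real.sqrt_mul hC.det_pos.le, Real.sqrt_mul (Real.sqrt_nonneg _)]

/-- Let `C₁, …, C_N` be real symmetric positive definite `k × k` matrices and
let `S` be the `N × N` matrix with `S_{a,b} = exp(−Dist(C_a, C_b))`, where `Dist` is the
Bhattacharyya distance. Then `S` is symmetric positive semidefinite. -/
theorem bhattacharyya_gram_posSemidef {k N : ℕ} (C : Fin N → Matrix (Fin k) (Fin k) ℝ)
    (hC : ∀ a, (C a).PosDef) :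
    (Matrix.of fun a b => Real.exp (-(bhatDist (C a) (C b)))).IsSymm ∧
    (Matrix.of fun a b => Real.exp (-(bhatDist (C a) (C b)))).PosSemidef := by
  have hsymm : (Matrix.of fun a b => Real.exp (-(bhatDist (C a) (C b)))).IsSymm := by
    ext a b
    simp [bhatDist, add_comm, mul_comm]
  refine ⟨hsymm, PosSemidef.of_dotProduct_mulVec_nonneg
    ((conjTranspose_eq_transpose_of_trivial _).trans hsymm) fun z => ?_⟩
  -- The functions whose `L²` Gram matrix is `√π ^ k • S`, weighted by the coefficients `z`.
  let w : Fin N → (Fin k → ℝ) → ℝ := fun a x =>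
    z a * √√(C a).det * Real.exp (-((1 / 2) * (x ⬝ᵥ C a *ᵥ x)))
  have hw : ∀ a b, (fun x => w a x * w b x) = fun x =>
      (z a * √√(C a).det * (z b * √√(C b).det)) *
        Real.exp (-(x ⬝ᵥ (((1 : ℝ) / 2) • (C a + C b)) *ᵥ x)) := by
    intro a b
    funext x
    have : -(x ⬝ᵥ (((1 : ℝ) / 2) • (C a + C b)) *ᵥ x) =
        -((1 / 2) * (x ⬝ᵥ C a *ᵥ x)) + -((1 / 2) * (x ⬝ᵥ C b *ᵥ x)) := by
      rw [smul_mulVec, add_mulVec, dotProduct_smul, dotProduct_add, smul_eq_mul]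
      ring
    rw [this, Real.exp_add]
    ring
  have hG := fun a b => gaussian_integral
    (((hC a).add (hC b)).smul (by norm_num : (0 : ℝ) < 1 / 2))
  have hwint : ∀ a b, Integrable (fun x => w a x * w b x) := fun a b => by
    rw [hw]
    exact (hG a b).1.const_mul _
  have hwval : ∀ a b, ∫ x, w a x * w b x =
      √Real.pi ^ k * (z a * (Real.exp (-(bhatDist (C a) (C b))) * z b)) := fun a b => by
    rw [hw, integral_const_mul, (hG a b).2, exp_neg_bhatDist (hC a) (hC b)]
    ring
  have key : √Real.pi ^ k *
      (star z ⬝ᵥ (Matrix.of fun a b => Real.exp (-(bhatDist (C a) (C b)))) *ᵥ z) =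
      ∫ x, (∑ a, w a x) ^ 2 := by
    simp only [sq, Finset.sum_mul_sum]
    rw [integral_finsetSum _ fun a _ => integrable_finsetSum _ fun b _ => hwint a b]
    simp only [integral_finsetSum _ fun b _ => hwint _ b, hwval, dotProduct, mulVec,
      Finset.mul_sum, of_apply, star_trivial]
  have hpi : 0 < √Real.pi ^ k := pow_pos (Real.sqrt_pos.mpr Real.pi_pos) k
  refine (mul_nonneg_iff_of_pos_left hpi).mp ?_
  rw [key]
  exact integral_nonneg fun x => sq_nonneg _
end
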